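/- Let G be drawn from a distribution in NSSBM(n,p,p̄,q) with α := p̄/(p−q) constant, satisfying the gap condition n(p−q) ≥ C₀·(√(n·p̄·log n) + log n) for a sufficiently large universal constant C₀. Then for n sufficiently large (depending only on α) and any δ ≥ n^{−10}, with probability at least 1 − δ, every vertex v ∈ V satisfies d[v] − λ2 > n(p−q)/4, where λ2 is the second smallest eigenvalue of the unnormalized Laplacian of G. -/

import Mathlib

open Matrix MeasureTheory
open scoped BigOperators ENNReal Classical

noncomputable section

instance measSG {n : ℕ} : MeasurableSpace (SimpleGraph (Fin n)) := ⊤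

variable {n : ℕ}

/-- Adjacency matrix of a graph, over `ℝ`. -/
def adjM (G : SimpleGraph (Fin n)) : Matrix (Fin n) (Fin n) ℝ :=
  Matrix.of fun v w => if G.Adj v w then 1 else 0

/-- Laplacian of a weighted adjacency matrix. -/
def wlap (W : Matrix (Fin n) (Fin n) ℝ) : Matrix (Fin n) (Fin n) ℝ :=
  Matrix.diagonal (fun v => ∑ w, W v w) - W

/-- Unnormalized Laplacian of a graph. -/
def lap (G : SimpleGraph (Fin n)) : Matrix (Fin n) (Fin n) ℝ := wlap (adjM G)

/-- `eig M k` is the `(k+1)`-st smallest eigenvalue (root of the characteristic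
polynomial, with multiplicity) of `M`; e.g. `eig M 1 = λ₂`. -/
def eig (M : Matrix (Fin n) (Fin n) ℝ) (k : ℕ) : ℝ :=
  (M.charpoly.roots.sort (· ≤ ·)).getD k 0

def IsUnitEigenvector (M : Matrix (Fin n) (Fin n) ℝ) (t : ℝ) (u : Fin n → ℝ) : Prop :=
  M.mulVec u = t • u ∧ ∑ v, (u v) ^ 2 = 1

/-- Membership in the first community `P₁ = {1, …, n/2}`. -/
def inP1 (n : ℕ) (v : Fin n) : Prop := (v : ℕ) < n / 2

/-- `v` and `w` are in the same community. -/
def sameSide (n : ℕ) (v w : Fin n) : Prop := inP1 n v ↔ inP1 n w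

/-- Number of neighbours of `v` in its own community. -/
def din (G : SimpleGraph (Fin n)) (v : Fin n) : ℕ :=
  Nat.card {w : Fin n // G.Adj v w ∧ sameSide n v w}

/-- Number of neighbours of `v` in the other community. -/
def dout (G : SimpleGraph (Fin n)) (v : Fin n) : ℕ :=
  Nat.card {w : Fin n // G.Adj v w ∧ ¬ sameSide n v w}

/-- Degree of `v`. -/
def deg (G : SimpleGraph (Fin n)) (v : Fin n) : ℕ :=
  Nat.card {w : Fin n // G.Adj v w}

/-- `μ` samples each pair `(v,w)`, `v < w`, as an edge independently with probability `P v w`. -/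
def IsEdgeProduct (P : Fin n → Fin n → ℝ) (μ : PMF (SimpleGraph (Fin n))) : Prop :=
  ∀ G : SimpleGraph (Fin n),
    μ G = ∏ e ∈ Finset.univ.filter (fun e : Fin n × Fin n => e.1 < e.2),
      (if G.Adj e.1 e.2 then ENNReal.ofReal (P e.1 e.2) else ENNReal.ofReal (1 - P e.1 e.2))

/-- The edge-probability matrix of a member of the `NSSBM(n,p,p̄,q)` family. -/
def NSSBMprob (n : ℕ) (p pbar q : ℝ) (P : Fin n → Fin n → ℝ) : Prop :=
  (∀ v w, P v w = P w v) ∧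
  (∀ v w : Fin n, v ≠ w → sameSide n v w → p ≤ P v w ∧ P v w ≤ pbar) ∧
  (∀ v w : Fin n, ¬ sameSide n v w → P v w = q)

/-- The ideal second eigenvector `u₂⋆`. -/
def u2star (n : ℕ) : Fin n → ℝ :=
  fun v => if inP1 n v then 1 / Real.sqrt n else -(1 / Real.sqrt n)

/-- Spectral bisection with matrix `M` recovers the planted partition of `G`. -/
def BisectCorrect (n : ℕ) (M : Matrix (Fin n) (Fin n) ℝ) : Prop :=
  ∀ u : Fin n → ℝ, IsUnitEigenvector M (eig M 1) u →
    ({v : Fin n | u v < 0} = {v : Fin n | inP1 n v} ∨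
     {v : Fin n | u v < 0} = {v : Fin n | ¬ inP1 n v})

/-- Off-diagonal part of the probability matrix: the expected adjacency matrix. -/
def offP (P : Fin n → Fin n → ℝ) : Matrix (Fin n) (Fin n) ℝ :=
  Matrix.of fun v w => if v = w then 0 else P v w

/-- Expected unnormalized Laplacian. -/
def expLap (P : Fin n → Fin n → ℝ) : Matrix (Fin n) (Fin n) ℝ := wlap (offP P)

/-- Euclidean norm. -/
def l2 (x : Fin n → ℝ) : ℝ := Real.sqrt (∑ v, (x v) ^ 2)

/-- Inner product. -/
def dotp (x y : Fin n → ℝ) : ℝ := ∑ v, x v * y v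

/-- Entrywise max (ℓ∞) norm. -/
def linf (x : Fin n → ℝ) : ℝ := ⨆ v, |x v|

/-- ℓ2 → ℓ2 operator norm of a matrix. -/
def opNorm (M : Matrix (Fin n) (Fin n) ℝ) : ℝ :=
  ‖LinearMap.toContinuousLinearMap (Matrix.toEuclideanLin M)‖

/-- The crossing edges of `μ` are independent `Bernoulli(q)`, while the internal
edges are arbitrary (possibly depending on the crossing edges). -/
def CrossingProduct (n : ℕ) (q : ℝ) (μ : PMF (SimpleGraph (Fin n))) : Prop :=
  ∃ (ν : PMF (SimpleGraph (Fin n))) (κ : SimpleGraph (Fin n) → PMF (SimpleGraph (Fin n))),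
    IsEdgeProduct (fun v w => if sameSide n v w then 0 else q) ν ∧
    (∀ H, ∀ G ∈ (κ H).support, ∀ v w, ¬ sameSide n v w → ((G.Adj v w) ↔ H.Adj v w)) ∧
    μ = ν.bind κ

/-- The pairs `(v, w)` with `v < w`. -/
def edgePairs (n : ℕ) : Finset (Fin n × Fin n) :=
  Finset.univ.filter fun e : Fin n × Fin n => e.1 < e.2

lemma edgePairs_inter_injective :
    Function.Injective fun G : SimpleGraph (Fin n) =>
      (edgePairs n).filter fun e => G.Adj e.1 e.2 := by
  intro G H h
  have key : ∀ v w : Fin n, v < w → (G.Adj v w ↔ H.Adj v w) := by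
    intro v w hvw
    have := Finset.ext_iff.1 h (v, w)
    simpa [edgePairs, hvw] using this
  ext v w
  rcases lt_trichotomy v w with hvw | hvw | hvw
  · exact key v w hvw
  · simp [hvw]
  · rw [G.adj_comm, H.adj_comm]
    exact key w v hvw

lemma bernoulli_mgf_le {p c : ℝ} (hp : 0 ≤ p) (hp1 : p ≤ 1) (hc : |c| ≤ 1) :
    ENNReal.ofReal p * ENNReal.ofReal (Real.exp c) + ENNReal.ofReal (1 - p)
      ≤ ENNReal.ofReal (Real.exp (p * (c + c ^ 2))) := by
  rw [← ENNReal.ofReal_mul hp, ← ENNReal.ofReal_add (by positivity) (by linarith)]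
  refine ENNReal.ofReal_le_ofReal ?_
  have h1 := (abs_le.1 (Real.abs_exp_sub_one_sub_id_le hc)).2
  have h2 := Real.add_one_le_exp (p * (c + c ^ 2))
  nlinarith [mul_le_mul_of_nonneg_left h1 hp]

lemma IsEdgeProduct.mgf_le {P : Fin n → Fin n → ℝ} {μ : PMF (SimpleGraph (Fin n))}
    (hμ : IsEdgeProduct P μ) {c : Fin n → Fin n → ℝ}
    (hP : ∀ v w, v < w → 0 ≤ P v w ∧ P v w ≤ 1) (hc : ∀ v w, |c v w| ≤ 1) :
    ∑ G, μ G * ENNReal.ofReal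
        (Real.exp (∑ e ∈ edgePairs n, if G.Adj e.1 e.2 then c e.1 e.2 else 0))
      ≤ ENNReal.ofReal
        (Real.exp (∑ e ∈ edgePairs n, P e.1 e.2 * (c e.1 e.2 + c e.1 e.2 ^ 2))) := by
  set f : Fin n × Fin n → ℝ≥0∞ :=
    fun e => ENNReal.ofReal (P e.1 e.2) * ENNReal.ofReal (Real.exp (c e.1 e.2)) with hf
  set g : Fin n × Fin n → ℝ≥0∞ := fun e => ENNReal.ofReal (1 - P e.1 e.2) with hg
  have hterm : ∀ G : SimpleGraph (Fin n), μ G * ENNReal.ofReal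
        (Real.exp (∑ e ∈ edgePairs n, if G.Adj e.1 e.2 then c e.1 e.2 else 0))
      = (fun t => (∏ e ∈ t, f e) * ∏ e ∈ edgePairs n \ t, g e)
          ((edgePairs n).filter fun e => G.Adj e.1 e.2) := by
    intro G
    rw [hμ G, Real.exp_sum, ENNReal.ofReal_prod_of_nonneg (fun _ _ => (Real.exp_pos _).le)]
    change (∏ e ∈ edgePairs n, _) * _ = _
    rw [← Finset.prod_mul_distrib, ← Finset.prod_filter_mul_prod_filter_not (edgePairs n)
      (fun e => G.Adj e.1 e.2)]
    simp only [← Finset.filter_not]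
    congr 1
    · refine Finset.prod_congr rfl fun e he => ?_
      simp [(Finset.mem_filter.1 he).2, hf]
    · refine Finset.prod_congr rfl fun e he => ?_
      simp [(Finset.mem_filter.1 he).2, hg]
  rw [Finset.sum_congr rfl fun G _ => hterm G,
    ← Finset.sum_image (s := Finset.univ)
      (f := fun t => (∏ e ∈ t, f e) * ∏ e ∈ edgePairs n \ t, g e)
      (edgePairs_inter_injective (n := n)).injOn]
  calc _ ≤ ∑ t ∈ (edgePairs n).powerset, (∏ e ∈ t, f e) * ∏ e ∈ edgePairs n \ t, g e := by
        refine Finset.sum_le_sum_of_subset ?_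
        intro t ht
        obtain ⟨G, -, rfl⟩ := Finset.mem_image.1 ht
        exact Finset.mem_powerset.2 (Finset.filter_subset _ _)
    _ = ∏ e ∈ edgePairs n, (f e + g e) := (Finset.prod_add _ _ _).symm
    _ ≤ ∏ e ∈ edgePairs n,
          ENNReal.ofReal (Real.exp (P e.1 e.2 * (c e.1 e.2 + c e.1 e.2 ^ 2))) := by
        refine Finset.prod_le_prod' fun e he => ?_
        have h := hP e.1 e.2 (Finset.mem_filter.1 he).2
        exact bernoulli_mgf_le h.1 h.2 (hc _ _)
    _ = _ := by
        rw [Real.exp_sum, ENNReal.ofReal_prod_of_nonneg (fun _ _ => (Real.exp_pos _).le)]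

lemma IsEdgeProduct.chernoff {P : Fin n → Fin n → ℝ} {μ : PMF (SimpleGraph (Fin n))}
    (hμ : IsEdgeProduct P μ) {c : Fin n → Fin n → ℝ}
    (hP : ∀ v w, v < w → 0 ≤ P v w ∧ P v w ≤ 1) (hc : ∀ v w, |c v w| ≤ 1) (t : ℝ) :
    μ.toMeasure {G | t ≤ ∑ e ∈ edgePairs n, if G.Adj e.1 e.2 then c e.1 e.2 else 0}
      ≤ ENNReal.ofReal
        (Real.exp (∑ e ∈ edgePairs n, P e.1 e.2 * (c e.1 e.2 + c e.1 e.2 ^ 2) - t)) := by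
  rw [PMF.toMeasure_apply_fintype, sub_eq_add_neg, Real.exp_add,
    ENNReal.ofReal_mul (Real.exp_pos _).le]
  refine le_trans ?_ (mul_le_mul_left (hμ.mgf_le hP hc) _)
  rw [Finset.sum_mul]
  refine Finset.sum_le_sum fun G _ => ?_
  by_cases hG : G ∈ {G : SimpleGraph (Fin n) |
      t ≤ ∑ e ∈ edgePairs n, if G.Adj e.1 e.2 then c e.1 e.2 else 0}
  · rw [Set.indicator_of_mem hG, mul_assoc, ← ENNReal.ofReal_mul (Real.exp_pos _).le,
      ← Real.exp_add]
    refine le_mul_of_one_le_right' ?_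
    rw [ENNReal.one_le_ofReal]
    exact Real.one_le_exp (by have : t ≤ _ := hG; linarith)
  · rw [Set.indicator_of_notMem hG]
    exact zero_le

lemma two_mul_sum_edgePairs {f : Fin n → Fin n → ℝ} (hf : ∀ v w, f v w = f w v)
    (hf0 : ∀ v, f v v = 0) :
    2 * ∑ e ∈ edgePairs n, f e.1 e.2 = ∑ v, ∑ w, f v w := by
  have h1 : ∑ e ∈ edgePairs n, f e.1 e.2 = ∑ v, ∑ w, if v < w then f v w else 0 := by
    rw [edgePairs, Finset.sum_filter, ← Finset.univ_product_univ, Finset.sum_product]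
  have h2 : ∑ e ∈ edgePairs n, f e.1 e.2 = ∑ v, ∑ w, if w < v then f v w else 0 := by
    rw [h1, Finset.sum_comm]
    simp only [hf]
  rw [two_mul]
  nth_rw 1 [h1]
  rw [h2, ← Finset.sum_add_distrib]
  refine Finset.sum_congr rfl fun v _ => ?_
  rw [← Finset.sum_add_distrib]
  refine Finset.sum_congr rfl fun w _ => ?_
  rcases lt_trichotomy v w with h | h | h
  · simp [h, h.not_gt]
  · simp [h, hf0]
  · simp [h, h.not_gt]

lemma List.Pairwise.countP_le_one {l : List ℝ} (hl : l.Pairwise (· ≤ ·)) {r : ℝ}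
    (hlen : 2 ≤ l.length) (hr : r < l.getD 1 0) : l.countP (fun x => x ≤ r) ≤ 1 := by
  match l, hlen with
  | a :: b :: m, _ =>
    simp only [List.getD_cons_succ, List.getD_cons_zero] at hr
    have h2 : (b :: m).countP (fun x => x ≤ r) = 0 := by
      rw [List.countP_eq_zero]
      intro x hx
      have : b ≤ x := by
        rcases List.mem_cons.1 hx with rfl | hx
        · exact le_rfl
        · exact List.rel_of_pairwise_cons (List.pairwise_cons.1 hl).2 hx
      simp only [decide_eq_true_eq, not_le]
      linarith
    rw [List.countP_cons, h2]
    split_ifs <;> simp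

/-- An upper bound on the second smallest eigenvalue by the quadratic form on a plane. -/
lemma eig_one_le {M : Matrix (Fin n) (Fin n) ℝ} (hM : M.IsHermitian) (hn : 2 ≤ n)
    {x y : Fin n → ℝ} {r : ℝ}
    (hxy : ∀ a b : ℝ, a • x + b • y = 0 → a = 0 ∧ b = 0)
    (hform : ∀ a b : ℝ, (a • x + b • y) ⬝ᵥ M *ᵥ (a • x + b • y)
      ≤ r * ((a • x + b • y) ⬝ᵥ (a • x + b • y))) :
    eig M 1 ≤ r := by
  by_contra! hr
  have hroots := hM.roots_charpoly_eq_eigenvalues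
  have hcount : (M.charpoly.roots.sort (· ≤ ·)).countP (fun x => x ≤ r) ≤ 1 := by
    refine List.Pairwise.countP_le_one (Multiset.pairwise_sort _ _) ?_ hr
    rw [Multiset.length_sort, hroots]
    simpa using hn
  have hcard : (Finset.univ.filter fun i => hM.eigenvalues i ≤ r).card ≤ 1 := by
    rw [← Multiset.coe_countP, Multiset.sort_eq, hroots, Multiset.countP_map] at hcount
    simpa [Finset.card, Finset.filter] using hcount
  obtain ⟨i₀, hi₀⟩ : ∃ i₀, ∀ i, i ≠ i₀ → r < hM.eigenvalues i := by
    by_cases h : ∃ i, hM.eigenvalues i ≤ r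
    · obtain ⟨i₀, hi₀⟩ := h
      refine ⟨i₀, fun i hi => ?_⟩
      by_contra! hle
      exact hi (Finset.card_le_one.1 hcard i (by simpa using hle) i₀ (by simpa using hi₀))
    · push Not at h
      exact ⟨⟨0, by omega⟩, fun i _ => h i⟩
  set e : Fin n → Fin n → ℝ := fun i => (hM.eigenvectorBasis i).ofLp with he
  obtain ⟨a, b, hab, horth⟩ : ∃ a b : ℝ, ¬ (a = 0 ∧ b = 0) ∧ e i₀ ⬝ᵥ (a • x + b • y) = 0 := by
    by_cases h : e i₀ ⬝ᵥ x = 0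
    · exact ⟨1, 0, by simp, by simpa using h⟩
    · refine ⟨-(e i₀ ⬝ᵥ y), e i₀ ⬝ᵥ x, fun h' => h h'.2, ?_⟩
      simp only [dotProduct_add, dotProduct_smul, smul_eq_mul]
      ring
  set z := a • x + b • y with hz
  have hz0 : z ≠ 0 := fun h => hab (hxy a b h)
  have hinner : ∀ u w : Fin n → ℝ,
      u ⬝ᵥ w = ∑ i, (e i ⬝ᵥ u) * (e i ⬝ᵥ w) := by
    intro u w
    have := hM.eigenvectorBasis.sum_inner_mul_inner (WithLp.toLp 2 u) (WithLp.toLp 2 w)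
    simp only [EuclideanSpace.inner_eq_star_dotProduct, star_trivial] at this
    rw [dotProduct_comm u w, ← this]
    refine Finset.sum_congr rfl fun i _ => ?_
    rw [dotProduct_comm w]
  have heM : ∀ i, e i ⬝ᵥ M *ᵥ z = hM.eigenvalues i * (e i ⬝ᵥ z) := by
    intro i
    have h1 : M *ᵥ e i = hM.eigenvalues i • e i := hM.mulVec_eigenvectorBasis i
    have hT : Mᵀ = M := by
      simpa [Matrix.IsHermitian, conjTranspose_eq_transpose_of_trivial] using hM
    rw [dotProduct_mulVec, ← mulVec_transpose, hT, h1, smul_dotProduct, smul_eq_mul]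
  have h := hform a b
  rw [← hz, hinner z (M *ᵥ z), hinner z z, Finset.mul_sum] at h
  have hle : ∀ i, r * ((e i ⬝ᵥ z) * (e i ⬝ᵥ z)) ≤ (e i ⬝ᵥ z) * (e i ⬝ᵥ M *ᵥ z) := by
    intro i
    rw [heM]
    by_cases hi : i = i₀
    · simp [hi, horth]
    · nlinarith [mul_self_nonneg (e i ⬝ᵥ z), hi₀ i hi]
  have heq := (Finset.sum_eq_sum_iff_of_le fun i _ => hle i).1
    (le_antisymm (Finset.sum_le_sum fun i _ => hle i) h)
  have hall : ∀ i, e i ⬝ᵥ z = 0 := by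
    intro i
    by_cases hi : i = i₀
    · rw [hi, horth]
    · have := heq i (Finset.mem_univ i)
      rw [heM] at this
      have h3 : (hM.eigenvalues i - r) * ((e i ⬝ᵥ z) * (e i ⬝ᵥ z)) = 0 := by linarith
      rcases mul_eq_zero.1 h3 with h4 | h4
      · linarith [hi₀ i hi]
      · exact mul_self_eq_zero.1 h4
  apply hz0
  rw [← dotProduct_self_eq_zero, hinner]
  simp [hall]

/-- Indicator that `v` and `w` lie in different communities. -/
def crossing (n : ℕ) (v w : Fin n) : ℝ := if sameSide n v w then 0 else 1

lemma crossing_comm (v w : Fin n) : crossing n v w = crossing n w v := by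
  by_cases hv : inP1 n v <;> by_cases hw : inP1 n w <;> simp [crossing, sameSide, hv, hw]

lemma crossing_self (v : Fin n) : crossing n v v = 0 := by simp [crossing, sameSide]

lemma crossing_sq (v w : Fin n) : crossing n v w ^ 2 = crossing n v w := by
  unfold crossing; split_ifs <;> simp

lemma crossing_nonneg (v w : Fin n) : 0 ≤ crossing n v w := by
  unfold crossing; split_ifs <;> simp

lemma crossing_le_one (v w : Fin n) : crossing n v w ≤ 1 := by
  unfold crossing; split_ifs <;> simp

lemma sum_crossing (hn : Even n) (v : Fin n) : ∑ w, crossing n v w = (n : ℝ) / 2 := by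
  obtain ⟨m, rfl⟩ := hn
  have hcard : (Finset.univ.filter fun w : Fin (m + m) => inP1 (m + m) w).card = m := by
    have h := Fin.card_filter_val_lt (n := m + m) (m := (m + m) / 2)
    rw [show min (m + m) ((m + m) / 2) = m by omega] at h
    refine (congrArg Finset.card ?_).trans h
    ext w
    rw [Finset.mem_filter, Finset.mem_filter]
    rfl
  have hsum : ∑ w : Fin (m + m), (if inP1 (m + m) w then (1 : ℝ) else 0) = m := by
    rw [Finset.sum_boole, hcard]
  by_cases hv : inP1 (m + m) v
  · have h : ∀ w, crossing (m + m) v w = 1 - if inP1 (m + m) w then 1 else 0 := by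
      intro w
      by_cases hw : inP1 (m + m) w <;> simp [crossing, sameSide, hv, hw]
    simp only [h, Finset.sum_sub_distrib, hsum]
    simp
  · have h : ∀ w, crossing (m + m) v w = if inP1 (m + m) w then 1 else 0 := by
      intro w
      by_cases hw : inP1 (m + m) w <;> simp [crossing, sameSide, hv, hw]
    simp only [h, hsum]
    push_cast
    ring

lemma adjM_comm (G : SimpleGraph (Fin n)) (v w : Fin n) : adjM G v w = adjM G w v := by
  simp [adjM, G.adj_comm]

lemma sum_adjM (G : SimpleGraph (Fin n)) (v : Fin n) : ∑ w, adjM G v w = deg G v := by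
  simp [adjM, deg, Nat.card_eq_fintype_card, Fintype.card_subtype]

lemma wlap_isHermitian {W : Matrix (Fin n) (Fin n) ℝ} (hW : ∀ v w, W v w = W w v) :
    (wlap W).IsHermitian := by
  refine (Matrix.isHermitian_diagonal _).sub ?_
  ext v w
  simp [hW v w]

lemma dotProduct_wlap_mulVec {W : Matrix (Fin n) (Fin n) ℝ} (hW : ∀ v w, W v w = W w v)
    (z : Fin n → ℝ) :
    2 * (z ⬝ᵥ wlap W *ᵥ z) = ∑ v, ∑ w, W v w * (z v - z w) ^ 2 := by
  have h1 : z ⬝ᵥ wlap W *ᵥ z = ∑ v, ∑ w, W v w * (z v * (z v - z w)) := by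
    simp only [wlap, Matrix.sub_mulVec, dotProduct, Pi.sub_apply, mulVec_diagonal]
    refine Finset.sum_congr rfl fun v _ => ?_
    simp only [mulVec, dotProduct]
    rw [Finset.sum_mul, ← Finset.sum_sub_distrib, Finset.mul_sum]
    exact Finset.sum_congr rfl fun w _ => by ring
  have h2 : z ⬝ᵥ wlap W *ᵥ z = ∑ v, ∑ w, W v w * (z w * (z w - z v)) := by
    rw [h1, Finset.sum_comm]
    simp only [hW]
  rw [two_mul]
  nth_rw 1 [h1]
  rw [h2, ← Finset.sum_add_distrib]
  refine Finset.sum_congr rfl fun v _ => ?_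
  rw [← Finset.sum_add_distrib]
  exact Finset.sum_congr rfl fun w _ => by ring

/-- The second Laplacian eigenvalue is at most the normalized size of the planted cut. -/
lemma eig_lap_one_le (hn : Even n) (h2 : 2 ≤ n) (G : SimpleGraph (Fin n)) :
    eig (lap G) 1 ≤ 2 / n * ∑ v, ∑ w, adjM G v w * crossing n v w := by
  have hn0 : (0 : ℝ) < n := by exact_mod_cast (by omega : 0 < n)
  set S := ∑ v, ∑ w, adjM G v w * crossing n v w with hS
  have hS0 : 0 ≤ S := Finset.sum_nonneg fun v _ => Finset.sum_nonneg fun w _ =>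
    mul_nonneg (by simp only [adjM, Matrix.of_apply]; split_ifs <;> simp) (crossing_nonneg v w)
  let v₀ : Fin n := ⟨0, by omega⟩
  let σ : Fin n → ℝ := fun v => 1 - 2 * crossing n v₀ v
  have hσ : ∑ v, σ v = 0 := by
    simp only [σ, Finset.sum_sub_distrib, ← Finset.mul_sum, sum_crossing hn]
    simp
    ring
  have hσsq : ∀ v, σ v ^ 2 = 1 := fun v => by
    simp only [σ]
    linear_combination 4 * crossing_sq v₀ v
  have hσdiff : ∀ v w, (σ v - σ w) ^ 2 = 4 * crossing n v w := by
    intro v w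
    by_cases h₀ : inP1 n v₀ <;> by_cases hv : inP1 n v <;> by_cases hw : inP1 n w <;>
      norm_num [σ, crossing, sameSide, h₀, hv, hw]
  refine eig_one_le (x := 1) (y := σ) (wlap_isHermitian (adjM_comm G)) h2 ?_ ?_
  · intro a b hab
    have hsum : ∑ v, (a + b * σ v) = 0 :=
      Finset.sum_eq_zero fun v _ => by simpa using congrFun hab v
    rw [Finset.sum_add_distrib, ← Finset.mul_sum, hσ] at hsum
    have ha : a = 0 := by
      have : (n : ℝ) * a = 0 := by simpa using hsum
      exact (mul_eq_zero.1 this).resolve_left hn0.ne'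
    refine ⟨ha, ?_⟩
    have := congrFun hab v₀
    simpa [ha, σ, crossing_self] using this
  · intro a b
    have hquad := dotProduct_wlap_mulVec (adjM_comm G) (a • (1 : Fin n → ℝ) + b • σ)
    have hval : ∑ v, ∑ w, adjM G v w *
        ((a • (1 : Fin n → ℝ) + b • σ) v - (a • (1 : Fin n → ℝ) + b • σ) w) ^ 2
        = 4 * b ^ 2 * S := by
      rw [hS, Finset.mul_sum]
      refine Finset.sum_congr rfl fun v _ => ?_
      rw [Finset.mul_sum]
      refine Finset.sum_congr rfl fun w _ => ?_
      simp only [Pi.add_apply, Pi.smul_apply, smul_eq_mul, Pi.one_apply]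
      linear_combination adjM G v w * b ^ 2 * hσdiff v w
    have hnorm : (a • (1 : Fin n → ℝ) + b • σ) ⬝ᵥ (a • (1 : Fin n → ℝ) + b • σ)
        = n * (a ^ 2 + b ^ 2) := by
      have h : ∀ v, (a • (1 : Fin n → ℝ) + b • σ) v * (a • (1 : Fin n → ℝ) + b • σ) v
          = (a ^ 2 + b ^ 2) + 2 * a * b * σ v := by
        intro v
        simp only [Pi.add_apply, Pi.smul_apply, smul_eq_mul, Pi.one_apply]
        linear_combination b ^ 2 * hσsq v
      simp only [dotProduct, h, Finset.sum_add_distrib, ← Finset.mul_sum, hσ]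
      simp
      ring
    rw [hval] at hquad
    rw [hnorm]
    have hr : 2 / n * S * (n * (a ^ 2 + b ^ 2)) = 2 * S * (a ^ 2 + b ^ 2) := by
      field_simp
    rw [hr]
    nlinarith [mul_nonneg hS0 (sq_nonneg a)]

/-- Coefficients comparing the normalized planted cut with the degree of `v`. -/
def cutMinusDeg (v x y : Fin n) : ℝ :=
  4 / n * crossing n x y - (if x = v then 1 else 0) - if y = v then 1 else 0

lemma cutMinusDeg_comm (v x y : Fin n) : cutMinusDeg v x y = cutMinusDeg v y x := by
  simp only [cutMinusDeg, crossing_comm x y]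
  ring

lemma abs_cutMinusDeg_le (hn : 4 ≤ n) (v x y : Fin n) : |cutMinusDeg v x y| ≤ 3 := by
  have hn' : (4 : ℝ) ≤ n := by exact_mod_cast hn
  have h4 : 4 / (n : ℝ) ≤ 1 := by rw [div_le_one (by linarith)]; exact hn'
  have h0 : 0 ≤ 4 / (n : ℝ) * crossing n x y := mul_nonneg (by positivity) (crossing_nonneg _ _)
  have h1 : 4 / (n : ℝ) * crossing n x y ≤ 1 :=
    mul_le_one₀ h4 (crossing_nonneg _ _) (crossing_le_one _ _)
  unfold cutMinusDeg
  rw [abs_le]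
  split_ifs <;> constructor <;> linarith

lemma sum_mul_cutMinusDeg {W : Matrix (Fin n) (Fin n) ℝ} (hW : ∀ x y, W x y = W y x)
    (v : Fin n) :
    ∑ x, ∑ y, W x y * cutMinusDeg v x y
      = 4 / n * (∑ x, ∑ y, W x y * crossing n x y) - 2 * ∑ y, W v y := by
  have h : ∀ x y, W x y * cutMinusDeg v x y = 4 / n * (W x y * crossing n x y)
      - (if x = v then W x y else 0) - if y = v then W x y else 0 := by
    intro x y
    simp only [cutMinusDeg]
    split_ifs <;> ring
  have h1 : ∑ x, ∑ y, (if x = v then W x y else 0) = ∑ y, W v y := by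
    rw [Finset.sum_comm]; simp
  have h2 : ∑ x, ∑ y, (if y = v then W x y else 0) = ∑ y, W v y := by
    simp [hW v]
  simp only [h, Finset.sum_sub_distrib, ← Finset.mul_sum, h1, h2]
  ring

lemma sum_cutMinusDeg_sq_le (hn : Even n) (h4 : 4 ≤ n) (v : Fin n) :
    ∑ x, ∑ y, cutMinusDeg v x y ^ 2 ≤ 12 * n := by
  have hn' : (4 : ℝ) ≤ n := by exact_mod_cast h4
  have hpt : ∀ x y, cutMinusDeg v x y ^ 2 ≤ 2 * (4 / n) ^ 2 * crossing n x y
      + (if x = v then 4 else 0) + if y = v then 4 else 0 := by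
    intro x y
    have hs := crossing_sq x y
    simp only [cutMinusDeg]
    set k : ℝ := 4 / n
    set t := crossing n x y
    have hk : 2 * k ^ 2 * t = 2 * (k * t) ^ 2 := by linear_combination (-2 * k ^ 2) * hs
    rw [hk]
    split_ifs
    · nlinarith [sq_nonneg (k * t + 2)]
    · nlinarith [sq_nonneg (k * t + 1)]
    · nlinarith [sq_nonneg (k * t + 1)]
    · nlinarith [sq_nonneg (k * t)]
  refine (Finset.sum_le_sum fun x _ => Finset.sum_le_sum fun y _ => hpt x y).trans ?_
  simp only [Finset.sum_add_distrib, ← Finset.mul_sum, sum_crossing hn]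
  simp only [Finset.sum_ite_eq', Finset.sum_const, Finset.card_univ, Fintype.card_fin,
    Finset.mem_univ, if_true, nsmul_eq_mul]
  have h1 : ∑ x : Fin n, (n : ℝ) * (if x = v then (4 : ℝ) else 0) = 4 * n := by
    simp [mul_comm]
  have h2 : 2 * (4 / (n : ℝ)) ^ 2 * (n * (n / 2)) = 16 := by
    field_simp
    norm_num
  rw [h1, h2]
  linarith

lemma offP_comm {P : Fin n → Fin n → ℝ} (hP : ∀ v w, P v w = P w v) (v w : Fin n) :
    offP P v w = offP P w v := by
  simp [offP, hP v w, eq_comm]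

section

variable {p pbar q : ℝ} {P : Fin n → Fin n → ℝ}

lemma NSSBMprob.mem_Icc (hP : NSSBMprob n p pbar q P) (hq : 0 ≤ q) (hqp : q < p)
    (hpp : p ≤ pbar) {v w : Fin n} (hvw : v ≠ w) : 0 ≤ P v w ∧ P v w ≤ pbar := by
  by_cases h : sameSide n v w
  · have := hP.2.1 v w hvw h
    constructor <;> linarith
  · rw [hP.2.2 v w h]
    constructor <;> linarith

lemma NSSBMprob.le_sum_offP (hP : NSSBMprob n p pbar q P) (hn : Even n) (v : Fin n) :
    n / 2 * p - p + n / 2 * q ≤ ∑ w, offP P v w := by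
  have hpt : ∀ w, p * (1 - crossing n v w - if w = v then 1 else 0) + q * crossing n v w
      ≤ offP P v w := by
    intro w
    by_cases hw : w = v
    · simp [hw, crossing_self, offP]
    · by_cases h : sameSide n v w
      · simpa [hw, crossing, h, offP, Ne.symm hw] using (hP.2.1 v w (Ne.symm hw) h).1
      · simp [hw, crossing, h, offP, Ne.symm hw, hP.2.2 v w h]
  refine le_trans (le_of_eq ?_) (Finset.sum_le_sum fun w _ => hpt w)
  simp only [Finset.sum_add_distrib, ← Finset.mul_sum, Finset.sum_sub_distrib, sum_crossing hn]
  simp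
  ring

lemma NSSBMprob.sum_offP_crossing (hP : NSSBMprob n p pbar q P) (hn : Even n) :
    ∑ v, ∑ w, offP P v w * crossing n v w = n * (n / 2) * q := by
  have hpt : ∀ v w, offP P v w * crossing n v w = q * crossing n v w := by
    intro v w
    by_cases h : sameSide n v w
    · simp [crossing, h]
    · have : v ≠ w := by rintro rfl; exact h Iff.rfl
      simp [offP, this, hP.2.2 v w h]
  simp only [hpt, ← Finset.mul_sum, sum_crossing hn]
  simp
  ring

/-- The exponent in the Chernoff bound for one vertex. -/
lemma NSSBMprob.exponent_le (hP : NSSBMprob n p pbar q P) (hn : Even n) (h4 : 4 ≤ n)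
    (hq : 0 ≤ q) (hqp : q < p) (hpp : p ≤ pbar) {s : ℝ} (hs : 0 ≤ s) (v : Fin n) :
    ∑ e ∈ edgePairs n, P e.1 e.2 *
        (s * cutMinusDeg v e.1 e.2 + (s * cutMinusDeg v e.1 e.2) ^ 2)
      ≤ s * (p - n * (p - q) / 2) + 6 * s ^ 2 * (n * pbar) := by
  have hn' : (4 : ℝ) ≤ n := by exact_mod_cast h4
  have hoff : ∑ e ∈ edgePairs n, P e.1 e.2 *
        (s * cutMinusDeg v e.1 e.2 + (s * cutMinusDeg v e.1 e.2) ^ 2)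
      = ∑ e ∈ edgePairs n, offP P e.1 e.2 *
        (s * cutMinusDeg v e.1 e.2 + (s * cutMinusDeg v e.1 e.2) ^ 2) := by
    refine Finset.sum_congr rfl fun e he => ?_
    have : e.1 ≠ e.2 := ((Finset.mem_filter.1 he).2).ne
    simp [offP, this]
  have h2 := two_mul_sum_edgePairs
    (f := fun x y => offP P x y * (s * cutMinusDeg v x y + (s * cutMinusDeg v x y) ^ 2))
    (fun x y => by rw [offP_comm hP.1, cutMinusDeg_comm]) (fun x => by simp [offP])
  have hpt : ∀ x y, offP P x y * (s * cutMinusDeg v x y + (s * cutMinusDeg v x y) ^ 2)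
      ≤ s * (offP P x y * cutMinusDeg v x y) + s ^ 2 * pbar * cutMinusDeg v x y ^ 2 := by
    intro x y
    have hle : offP P x y ≤ pbar := by
      by_cases hxy : x = y
      · simp only [offP, hxy, Matrix.of_apply, if_true]; linarith
      · simpa [offP, hxy] using (hP.mem_Icc hq hqp hpp hxy).2
    nlinarith [mul_le_mul_of_nonneg_right hle (sq_nonneg (s * cutMinusDeg v x y))]
  have hsum := Finset.sum_le_sum fun x (_ : x ∈ Finset.univ) =>
    Finset.sum_le_sum fun y (_ : y ∈ Finset.univ) => hpt x y
  simp only [Finset.sum_add_distrib, ← Finset.mul_sum] at hsum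
  rw [sum_mul_cutMinusDeg (offP_comm hP.1), hP.sum_offP_crossing hn] at hsum
  have hdeg := mul_le_mul_of_nonneg_left (hP.le_sum_offP hn v) hs
  have hsq := mul_le_mul_of_nonneg_left (sum_cutMinusDeg_sq_le hn h4 v)
    (mul_nonneg (sq_nonneg s) (by linarith : 0 ≤ pbar))
  have hcut : 4 / (n : ℝ) * (n * (n / 2) * q) = 2 * n * q := by
    field_simp
    norm_num
  rw [hcut] at hsum
  simp only [mul_add] at h2 hsum
  rw [hoff]
  simp only [Finset.sum_add_distrib, mul_add] at *
  nlinarith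

lemma sum_adj_cutMinusDeg (hn : Even n) (h4 : 4 ≤ n) (G : SimpleGraph (Fin n)) (v : Fin n)
    {s : ℝ} (hs : 0 ≤ s) :
    s * (eig (lap G) 1 - deg G v)
      ≤ ∑ e ∈ edgePairs n, if G.Adj e.1 e.2 then s * cutMinusDeg v e.1 e.2 else 0 := by
  have h2 := two_mul_sum_edgePairs
    (f := fun x y => if G.Adj x y then s * cutMinusDeg v x y else 0)
    (fun x y => by simp only [G.adj_comm x y, cutMinusDeg_comm v x y]) (fun x => by simp)
  have hpt : ∀ x y, (if G.Adj x y then s * cutMinusDeg v x y else 0)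
      = s * (adjM G x y * cutMinusDeg v x y) := by
    intro x y
    simp [adjM]
  simp only [hpt, ← Finset.mul_sum] at h2 ⊢
  rw [sum_mul_cutMinusDeg (adjM_comm G), sum_adjM] at h2
  have h := mul_le_mul_of_nonneg_left (eig_lap_one_le hn (by omega) G) hs
  set S := ∑ x, ∑ y, adjM G x y * crossing n x y
  have : 4 / (n : ℝ) * S = 2 * (2 / n * S) := by ring
  rw [this] at h2
  nlinarith

lemma NSSBMprob.vertex_failure_le {μ : PMF (SimpleGraph (Fin n))}
    (hP : NSSBMprob n p pbar q P) (hμ : IsEdgeProduct P μ) (hn : Even n) (h4 : 4 ≤ n)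
    (hq : 0 ≤ q) (hqp : q < p) (hpp : p ≤ pbar) (hpbar : pbar ≤ 1)
    (hgap : 200 * (Real.sqrt (n * pbar * Real.log n) + Real.log n) ≤ n * (p - q)) (v : Fin n) :
    μ.toMeasure {G | (deg G v : ℝ) - eig (lap G) 1 ≤ n * (p - q) / 4}
      ≤ ENNReal.ofReal (1 / (n : ℝ) ^ 11) := by
  have hn' : (4 : ℝ) ≤ n := by exact_mod_cast h4
  have hL : 1 ≤ Real.log n := by
    rw [Real.le_log_iff_exp_le (by linarith)]
    linarith [Real.exp_one_lt_d9]
  set L := Real.log n with hLdef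
  set M := (n : ℝ) * pbar with hM
  set D := (n : ℝ) * (p - q) with hD
  have hM0 : 0 < M := by
    have : 0 < pbar := by linarith
    positivity
  have hsqrt := Real.sqrt_nonneg (M * L)
  have hsq := Real.sq_sqrt (by positivity : 0 ≤ M * L)
  have hD0 : 0 < D := by linarith
  have hDM : D ≤ M := by
    rw [hD, hM]
    exact mul_le_mul_of_nonneg_left (by linarith) (by linarith)
  have hDsq : 40000 * (M * L) ≤ D ^ 2 := by
    have : 200 * Real.sqrt (M * L) ≤ D := by linarith
    nlinarith
  set s := D / (96 * M) with hs
  have hs0 : 0 ≤ s := by positivity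
  have hsM : D = 96 * M * s := by rw [hs]; field_simp
  have hs1 : s ≤ 1 / 96 := by
    rw [hs, div_le_div_iff₀ (by positivity) (by norm_num)]
    linarith
  have hsL : 4 * L ≤ M * s ^ 2 := by
    rw [hsM] at hDsq
    have : M * (40000 * L) ≤ M * (9216 * (M * s ^ 2)) := by nlinarith
    have := le_of_mul_le_mul_left this hM0
    linarith
  have hchern := hμ.chernoff (c := fun x y => s * cutMinusDeg v x y)
    (fun x y hxy => ⟨(hP.mem_Icc hq hqp hpp hxy.ne).1,
      (hP.mem_Icc hq hqp hpp hxy.ne).2.trans hpbar⟩)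
    (fun x y => by
      rw [abs_mul, abs_of_nonneg hs0]
      nlinarith [abs_cutMinusDeg_le h4 v x y, abs_nonneg (cutMinusDeg v x y)])
    (-(s * (D / 4)))
  refine (measure_mono ?_).trans (hchern.trans (ENNReal.ofReal_le_ofReal ?_))
  · intro G hG
    refine le_trans ?_ (sum_adj_cutMinusDeg hn h4 G v hs0)
    have hG' : (deg G v : ℝ) - eig (lap G) 1 ≤ D / 4 := hG
    nlinarith [mul_le_mul_of_nonneg_left hG' hs0]
  · have hexp := hP.exponent_le hn h4 hq hqp hpp hs0 v
    have hn11 : 1 / (n : ℝ) ^ 11 = Real.exp (-(11 * L)) := by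
      rw [Real.exp_neg, hLdef, show (11 : ℝ) = ((11 : ℕ) : ℝ) by norm_num, Real.exp_nat_mul,
        Real.exp_log (by linarith), one_div]
    rw [hn11]
    refine Real.exp_le_exp.2 ?_
    have hp : p ≤ D / 8 := by linarith
    have hsp := mul_le_mul_of_nonneg_left hp hs0
    have hsD : s * D = 96 * (M * s ^ 2) := by rw [hsM]; ring
    rw [← hD, ← hM] at hexp
    nlinarith

end

/-- **Lemma (degrees dominate λ₂).**
In the NSSBM setting with `α = p̄/(p-q)` constant and the gap condition holding for a
sufficiently large universal constant `C₀`, for `n` sufficiently large (depending only on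
`α`) and any `δ ≥ n⁻¹⁰`, with probability at least `1 - δ`, every vertex `v` satisfies
`d[v] - λ₂ > n(p-q)/4`. -/
theorem deg_minus_lambda2_positive :
    ∃ C0 : ℝ, 0 < C0 ∧ ∀ α : ℝ, ∃ N : ℕ, ∀ n : ℕ, N ≤ n → Even n →
      ∀ p pbar q δ : ℝ, 0 ≤ q → q < p → p ≤ pbar → pbar ≤ 1 →
        pbar / (p - q) = α → 1 / (n : ℝ) ^ 10 ≤ δ →
      ∀ (P : Fin n → Fin n → ℝ) (μ : PMF (SimpleGraph (Fin n))),
        NSSBMprob n p pbar q P → IsEdgeProduct P μ →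
        C0 * (Real.sqrt ((n : ℝ) * pbar * Real.log n) + Real.log n) ≤ (n : ℝ) * (p - q) →
        1 - ENNReal.ofReal δ ≤ μ.toMeasure {G |
          ∀ v : Fin n, (n : ℝ) * (p - q) / 4 < (deg G v : ℝ) - eig (lap G) 1} := by
  refine ⟨200, by norm_num, fun α => ⟨4, ?_⟩⟩
  intro n h4 hn p pbar q δ hq hqp hpp hpbar _ hδ P μ hP hμ hgap
  have hn0 : (0 : ℝ) < n := by exact_mod_cast (by omega : 0 < n)
  set good := {G : SimpleGraph (Fin n) |
    ∀ v : Fin n, (n : ℝ) * (p - q) / 4 < (deg G v : ℝ) - eig (lap G) 1} with hgood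
  have hbad : μ.toMeasure goodᶜ ≤ ENNReal.ofReal δ := by
    have hcompl : goodᶜ = ⋃ v : Fin n,
        {G | (deg G v : ℝ) - eig (lap G) 1 ≤ n * (p - q) / 4} := by
      ext G
      simp [hgood]
    rw [hcompl]
    refine (measure_iUnion_fintype_le _ _).trans ?_
    refine (Finset.sum_le_sum fun v _ =>
      hP.vertex_failure_le hμ hn h4 hq hqp hpp hpbar hgap v).trans ?_
    rw [Finset.sum_const, Finset.card_univ, Fintype.card_fin, nsmul_eq_mul,
      ← ENNReal.ofReal_natCast, ← ENNReal.ofReal_mul (by positivity)]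
    refine ENNReal.ofReal_le_ofReal (le_trans (le_of_eq ?_) hδ)
    field_simp
  have hmeas : MeasurableSet good := MeasurableSpace.measurableSet_top
  rw [tsub_le_iff_right, ← prob_add_prob_compl (μ := μ.toMeasure) hmeas]
  gcongr

end
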